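/- Let ABCDE be a strictly convex equilateral pentagon with unit side length whose interior angles satisfy 2α + β = 2π and 2δ + γ = 2π (type 8 conditions). Then the diagonal BD is perpendicular to the side DE, and dist(B,D) = 2·sin(γ/2). -/

import Mathlib

/-!
The triangle `BCD` is isosceles with apex angle `γ`, so `BD = 2 sin (γ/2)` and
`∠CDB = π/2 - γ/2`. The hypothesis `2δ + γ = 2π` says `∠CDE = π - γ/2`. Since `B` and `E` lie on
the same side of the line `CD`, the angle `∠BDE` is the difference of these two, which is `π/2`.
-/

open EuclideanGeometry

/-- Signed area determinant of two plane vectors. -/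
noncomputable def det2 (u v : EuclideanSpace ℝ (Fin 2)) : ℝ :=
  u 0 * v 1 - u 1 * v 0

/-- `R` lies strictly to the left of the directed line from `P` to `Q`. -/
def SLeft (P Q R : EuclideanSpace ℝ (Fin 2)) : Prop :=
  0 < det2 (Q - P) (R - P)

/-- The five points are in strictly convex position, listed in counterclockwise
cyclic order along their convex hull (in particular no three are collinear):
for every directed edge of the pentagon, all remaining vertices lie strictly to its left. -/
def CcwConvex5 (A B C D E : EuclideanSpace ℝ (Fin 2)) : Prop :=
  SLeft A B C ∧ SLeft A B D ∧ SLeft A B E ∧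
  SLeft B C D ∧ SLeft B C E ∧ SLeft B C A ∧
  SLeft C D E ∧ SLeft C D A ∧ SLeft C D B ∧
  SLeft D E A ∧ SLeft D E B ∧ SLeft D E C ∧
  SLeft E A B ∧ SLeft E A C ∧ SLeft E A D

/-- The five points are in strictly convex position, listed in cyclic order
(either orientation) along their convex hull, with no three collinear. -/
def ConvexPos5 (A B C D E : EuclideanSpace ℝ (Fin 2)) : Prop :=
  CcwConvex5 A B C D E ∨ CcwConvex5 E D C B A

/-- The pentagon `ABCDE` is equilateral. -/
def Equilateral5 (A B C D E : EuclideanSpace ℝ (Fin 2)) : Prop :=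
  dist A B = dist B C ∧ dist B C = dist C D ∧ dist C D = dist D E ∧ dist D E = dist E A

section InnerProduct

variable {V P : Type*} [NormedAddCommGroup V] [InnerProductSpace ℝ V] [MetricSpace P]
  [NormedAddTorsor V P]

lemma angle_eq_abs_angle_sub_angle_of_eq_smul_add_smul {u v w : V} {a b : ℝ} (hv : v ≠ 0)
    (hw : w ≠ 0) (hb : 0 < b) (h : v = a • u + b • w) :
    InnerProductGeometry.angle v w =
      |InnerProductGeometry.angle u w - InnerProductGeometry.angle u v| := by
  rcases le_total 0 a with ha | ha
  · have hmem : v ∈ Submodule.span NNReal {u, w} :=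
      Submodule.mem_span_pair.2 ⟨⟨a, ha⟩, ⟨b, hb.le⟩, h.symm⟩
    rw [InnerProductGeometry.angle_eq_angle_add_add_angle_add_of_mem_span hv hmem,
      add_sub_cancel_left, abs_of_nonneg (InnerProductGeometry.angle_nonneg v w)]
  · have hw_eq : w = (-a / b) • u + b⁻¹ • v := by
      rw [h, smul_add, smul_smul, smul_smul, inv_mul_cancel₀ hb.ne', ← add_assoc, ← add_smul]
      simp [div_eq_inv_mul]
    have hmem : w ∈ Submodule.span NNReal {u, v} :=
      Submodule.mem_span_pair.2 ⟨⟨-a / b, div_nonneg (neg_nonneg.2 ha) hb.le⟩,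
        ⟨b⁻¹, (inv_pos.2 hb).le⟩, hw_eq.symm⟩
    rw [InnerProductGeometry.angle_eq_angle_add_add_angle_add_of_mem_span hw hmem,
      sub_add_cancel_left, abs_neg, abs_of_nonneg (InnerProductGeometry.angle_nonneg w v),
      InnerProductGeometry.angle_comm]

lemma angle_eq_abs_angle_sub_angle_of_sSameSide {p₁ p₂ p₃ p₄ : P}
    (h : line[ℝ, p₁, p₂].SSameSide p₃ p₄) :
    ∠ p₃ p₂ p₄ = |∠ p₁ p₂ p₄ - ∠ p₁ p₂ p₃| := by
  have hp₂ : p₂ ∈ line[ℝ, p₁, p₂] := right_mem_affineSpan_pair ℝ p₁ p₂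
  obtain ⟨h₃, h₄, q, hq, hray⟩ := (AffineSubspace.sSameSide_iff_exists_left hp₂).1 h
  have h₃₂ : p₃ -ᵥ p₂ ≠ 0 := vsub_ne_zero.2 (ne_of_mem_of_not_mem hp₂ h₃).symm
  have h₄₂ : p₄ -ᵥ p₂ ≠ 0 := vsub_ne_zero.2 (ne_of_mem_of_not_mem hp₂ h₄).symm
  have h₄q : p₄ -ᵥ q ≠ 0 := vsub_ne_zero.2 (ne_of_mem_of_not_mem hq h₄).symm
  obtain ⟨b, hb, hb_eq⟩ := hray.exists_pos_right h₃₂ h₄q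
  obtain ⟨t, rfl⟩ := mem_affineSpan_pair_iff_exists_lineMap_rev_eq.1 hq
  refine angle_eq_abs_angle_sub_angle_of_eq_smul_add_smul (a := -(b * t)) h₃₂ h₄₂ hb ?_
  rw [hb_eq, ← vsub_sub_vsub_cancel_right p₄ _ p₂, AffineMap.lineMap_vsub_left]
  module

lemma angle_eq_pi_sub_angle_div_two_of_dist_eq {p₁ p₂ p₃ : P} (h : dist p₁ p₂ = dist p₁ p₃)
    (hne : p₂ ≠ p₁) : ∠ p₁ p₂ p₃ = (Real.pi - ∠ p₂ p₁ p₃) / 2 := by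
  have hsum := angle_add_angle_add_angle_eq_pi p₃ hne
  rw [angle_comm p₃ p₁ p₂] at hsum
  linarith [angle_eq_angle_of_dist_eq h, angle_comm p₂ p₃ p₁]

lemma dist_eq_two_mul_dist_mul_sin_angle_div_two_of_dist_eq {p₁ p₂ p₃ : P}
    (h : dist p₁ p₂ = dist p₁ p₃) :
    dist p₂ p₃ = 2 * dist p₁ p₂ * Real.sin (∠ p₂ p₁ p₃ / 2) := by
  have hsin : 0 ≤ Real.sin (∠ p₂ p₁ p₃ / 2) :=
    Real.sin_nonneg_of_nonneg_of_le_pi (by linarith [angle_nonneg p₂ p₁ p₃])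
      (by linarith [angle_le_pi p₂ p₁ p₃, Real.pi_pos])
  rw [← sq_eq_sq₀ dist_nonneg (by positivity)]
  calc dist p₂ p₃ ^ 2
      = 2 * dist p₁ p₂ ^ 2 * (1 - Real.cos (2 * (∠ p₂ p₁ p₃ / 2))) := by
        rw [sq, dist_sq_eq_dist_sq_add_dist_sq_sub_two_mul_dist_mul_dist_mul_cos_angle p₂ p₁ p₃,
          dist_comm p₂ p₁, dist_comm p₃ p₁, ← h, mul_div_cancel₀ _ two_ne_zero]
        ring
    _ = (2 * dist p₁ p₂ * Real.sin (∠ p₂ p₁ p₃ / 2)) ^ 2 := by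
        rw [Real.cos_two_mul, Real.cos_sq']
        ring

theorem type8_perpendicular_diagonal_general {B C D E : P}
    (hside : line[ℝ, C, D].SSameSide B E) (hdist : dist B C = dist C D)
    (hangle : 2 * ∠ C D E + ∠ B C D = 2 * Real.pi) :
    ∠ B D E = Real.pi / 2 ∧ dist B D = 2 * dist B C * Real.sin (∠ B C D / 2) := by
  have hisos : dist C B = dist C D := dist_comm B C ▸ hdist
  have hDC : D ≠ C := by
    rintro rfl
    have hBD : B = D := dist_eq_zero.1 (hdist.trans (dist_self D))
    exact hside.left_notMem (hBD ▸ left_mem_affineSpan_pair ℝ D D)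
  have hCDB : ∠ C D B = (Real.pi - ∠ B C D) / 2 := by
    rw [angle_eq_pi_sub_angle_div_two_of_dist_eq hisos.symm hDC, EuclideanGeometry.angle_comm]
  have hCDE : ∠ C D E = Real.pi - ∠ B C D / 2 := by linarith
  constructor
  · calc ∠ B D E = |∠ C D E - ∠ C D B| := angle_eq_abs_angle_sub_angle_of_sSameSide hside
      _ = |Real.pi / 2| := by
        rw [hCDE, hCDB]
        congr 1
        ring
      _ = Real.pi / 2 := abs_of_pos Real.pi_div_two_pos
  · rw [dist_eq_two_mul_dist_mul_sin_angle_div_two_of_dist_eq hisos, dist_comm C B]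

end InnerProduct

section Plane

variable {P Q R S : EuclideanSpace ℝ (Fin 2)}

lemma SLeft.notMem_affineSpan_pair (h : SLeft P Q R) : R ∉ line[ℝ, P, Q] := by
  intro hR
  obtain ⟨t, rfl⟩ := mem_affineSpan_pair_iff_exists_lineMap_eq.1 hR
  simp only [SLeft, det2, AffineMap.lineMap_apply, vsub_eq_sub, vadd_eq_add, PiLp.sub_apply,
    PiLp.add_apply, PiLp.smul_apply, smul_eq_mul] at h
  linarith

lemma det2_smul_eq_add (u v w : EuclideanSpace ℝ (Fin 2)) :
    det2 u w • v = det2 v w • u + det2 u v • w := by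
  ext i
  fin_cases i <;>
    simp only [det2, PiLp.smul_apply, PiLp.add_apply, smul_eq_mul, Fin.zero_eta, Fin.mk_one] <;>
    ring

lemma SLeft.sSameSide (hR : SLeft P Q R) (hS : SLeft P Q S) :
    line[ℝ, P, Q].SSameSide R S := by
  have hdet : det2 (Q - P) (S - P) ≠ 0 := ne_of_gt hS
  have hRP : R - P = (det2 (R - P) (S - P) / det2 (Q - P) (S - P)) • (Q - P) +
      (det2 (Q - P) (R - P) / det2 (Q - P) (S - P)) • (S - P) := by
    rw [div_eq_inv_mul, div_eq_inv_mul, mul_smul, mul_smul, ← smul_add, ← det2_smul_eq_add,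
      inv_smul_smul₀ hdet]
  have hR_eq : R = (det2 (Q - P) (R - P) / det2 (Q - P) (S - P)) • (S -ᵥ P) +ᵥ
      AffineMap.lineMap P Q (det2 (R - P) (S - P) / det2 (Q - P) (S - P)) := by
    rw [AffineMap.lineMap_apply, vadd_vadd, add_comm, vsub_eq_sub, vsub_eq_sub, ← hRP,
      vadd_eq_add, sub_add_cancel]
  rw [hR_eq]
  exact AffineSubspace.sSameSide_smul_vsub_vadd_left hS.notMem_affineSpan_pair
    (left_mem_affineSpan_pair ℝ P Q) (AffineMap.lineMap_mem_affineSpan_pair _ P Q) (div_pos hR hS)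

lemma ConvexPos5.sSameSide {A B C D E : EuclideanSpace ℝ (Fin 2)}
    (h : ConvexPos5 A B C D E) : line[ℝ, C, D].SSameSide B E := by
  rcases h with ⟨-, -, -, -, -, -, hCDE, -, hCDB, -⟩ | ⟨-, -, -, hDCB, -, hDCE, -⟩
  · exact hCDB.sSameSide hCDE
  · rw [Set.pair_comm]
    exact hDCB.sSameSide hDCE

end Plane

theorem type8_perpendicular_diagonal
    (A B C D E : EuclideanSpace ℝ (Fin 2)) (α β γ δ ε : ℝ)
    (hconv : ConvexPos5 A B C D E) (hequi : Equilateral5 A B C D E)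
    (hα : α = ∠ E A B) (hβ : β = ∠ A B C) (hγ : γ = ∠ B C D)
    (hδ : δ = ∠ C D E) (hε : ε = ∠ D E A)
    (hunit : dist A B = 1)
    (h1 : 2 * α + β = 2 * Real.pi) (h2 : 2 * δ + γ = 2 * Real.pi) :
    ∠ B D E = Real.pi / 2 ∧ dist B D = 2 * Real.sin (γ / 2) := by
  obtain ⟨hAB, hBC, -⟩ := hequi
  subst hγ hδ
  simpa [← hAB, hunit] using type8_perpendicular_diagonal_general hconv.sSameSide hBC h2
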